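/- arXiv:1808.10094 — 7 statements merged into one kernel-verified Lean document; each statement's English description precedes it below -/
import Mathlib

section
/- Let c > 0, g > 1, α < 0, β < 0, h > 0, I > 0, and let 0 < P_min ≤ P_max satisfy the high-PDR condition α·(h·P_min/I)^β ≥ (1−β)/β (since P ↦ α·(h·P/I)^β is increasing, this bound then holds for every P in the interval). Then the utility U(P) = −c·P^g + ln(1 + exp(α·(h·P/I)^β)) is strictly concave on [P_min, P_max]. -/
open Real

lemma aux_concave (A β Pmin Pmax : ℝ) (hA : A < 0) (hβ : β < 0) (hPmin : 0 < Pmin)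
    (hb : A * β * Pmin ^ β ≤ 1 - β) :
    ConcaveOn ℝ (Set.Icc Pmin Pmax) (fun P : ℝ => Real.log (1 + Real.exp (A * P ^ β))) := by
  have hd1 : ∀ P : ℝ, 0 < P → HasDerivAt (fun P : ℝ => Real.log (1 + Real.exp (A * P ^ β)))
      (A * (β * P ^ (β - 1)) / (1 + Real.exp (-(A * P ^ β)))) P := by
    intro P hP
    have h1 := (((Real.hasDerivAt_rpow_const (p := β) (Or.inl hP.ne')).const_mul A).exp.const_add
      1).log (by positivity)
    refine h1.congr_deriv ?_
    rw [Real.exp_neg]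
    have := Real.exp_pos (A * P ^ β)
    field_simp
    ring
  have hd2 : ∀ P : ℝ, 0 < P → HasDerivAt
      (fun P : ℝ => A * (β * P ^ (β - 1)) / (1 + Real.exp (-(A * P ^ β))))
      ((A * (β * ((β - 1) * P ^ (β - 1 - 1))) * (1 + Real.exp (-(A * P ^ β)))
        - A * (β * P ^ (β - 1)) * (Real.exp (-(A * P ^ β)) * (-(A * (β * P ^ (β - 1))))))
        / (1 + Real.exp (-(A * P ^ β))) ^ 2) P := by
    intro P hP
    have h1 := ((Real.hasDerivAt_rpow_const (p := β) (Or.inl hP.ne')).const_mul A).neg.exp.const_add 1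
    have h2 := ((Real.hasDerivAt_rpow_const (p := β - 1) (Or.inl hP.ne')).const_mul β).const_mul A
    exact h2.div h1 (by positivity)
  refine concaveOn_of_hasDerivWithinAt2_nonpos (convex_Icc _ _)
    (fun P hP => (hd1 P (hPmin.trans_le hP.1)).continuousAt.continuousWithinAt)
    (fun P hP => (hd1 P (hPmin.trans_le (interior_subset hP).1)).hasDerivWithinAt)
    (fun P hP => (hd2 P (hPmin.trans_le (interior_subset hP).1)).hasDerivWithinAt) ?_
  intro P hP
  have hP' := (interior_subset hP).1
  have hP0 : 0 < P := hPmin.trans_le hP'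
  have hAβ : 0 < A * β := mul_pos_of_neg_of_neg hA hβ
  have hb' : A * β * P ^ β ≤ 1 - β :=
    (mul_le_mul_of_nonneg_left (Real.rpow_le_rpow_of_nonpos hPmin hP' hβ.le) hAβ.le).trans hb
  have e1 : P ^ (β - 1) * P ^ (β - 1) = P ^ (β - 1 - 1) * P ^ β := by
    rw [← Real.rpow_add hP0, ← Real.rpow_add hP0]; ring_nf
  have hE := Real.exp_pos (-(A * P ^ β))
  generalize Real.exp (-(A * P ^ β)) = E at *
  have hQ : 0 < P ^ (β - 1 - 1) := by positivity
  apply div_nonpos_of_nonpos_of_nonneg _ (by positivity)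
  have e2 : A * (β * ((β - 1) * P ^ (β - 1 - 1))) * (1 + E)
        - A * (β * P ^ (β - 1)) * (E * (-(A * (β * P ^ (β - 1)))))
      = (A * β * P ^ (β - 1 - 1)) * ((β - 1) * (1 + E) + E * (A * β * P ^ β)) := by
    linear_combination (A * β) ^ 2 * E * e1
  rw [e2]
  apply mul_nonpos_of_nonneg_of_nonpos (by positivity)
  nlinarith

/-- In the high-PDR regime, the utility
`U(P) = -c·P^g + ln(1 + exp(α·(h·P/I)^β))` is strictly concave on `[P_min, P_max]`. -/
theorem stmt3 (c g α β h I Pmin Pmax : ℝ) (hc : 0 < c) (hg : 1 < g)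
    (hα : α < 0) (hβ : β < 0) (hh : 0 < h) (hI : 0 < I)
    (hPmin : 0 < Pmin) (hle : Pmin ≤ Pmax)
    (hhigh : (1 - β) / β ≤ α * (h * Pmin / I) ^ β) :
    StrictConcaveOn ℝ (Set.Icc Pmin Pmax)
      (fun P : ℝ => -c * P ^ g + Real.log (1 + Real.exp (α * (h * P / I) ^ β))) := by
  have hk : 0 < h / I := by positivity
  have key : ∀ P : ℝ, 0 < P → α * (h * P / I) ^ β = (α * (h / I) ^ β) * P ^ β := by
    intro P hP
    rw [mul_div_right_comm, Real.mul_rpow hk.le hP.le, mul_assoc]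
  have hA : α * (h / I) ^ β < 0 := mul_neg_of_neg_of_pos hα (by positivity)
  rw [key Pmin hPmin, div_le_iff_of_neg hβ] at hhigh
  have h1 := aux_concave (α * (h / I) ^ β) β Pmin Pmax hA hβ hPmin (by linarith)
  have h2 : StrictConcaveOn ℝ (Set.Icc Pmin Pmax) (fun P : ℝ => -c * P ^ g) := by
    have h3 := (strictConvexOn_rpow hg).subset
      (fun P (hP : P ∈ Set.Icc Pmin Pmax) => (hPmin.le.trans hP.1 : P ∈ Set.Ici (0:ℝ)))
      (convex_Icc _ _)
    refine ⟨h3.1, fun x hx y hy hxy a b ha hb hab => ?_⟩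
    have := h3.2 hx hy hxy ha hb hab
    simp only [smul_eq_mul] at this ⊢
    nlinarith
  refine (h2.add_concaveOn h1).congr ?_
  intro P hP
  simp only [Pi.add_apply]
  rw [key P (hPmin.trans_le hP.1)]
end

section
/- Let c > 0, g > 1, α < 0, β < 0, h > 0, I > 0, and let 0 < P_min ≤ P_max satisfy α·(h·P_min/I)^β ≥ (1−β)/β. Then the utility U(P) = −c·P^g + ln(1 + exp(α·(h·P/I)^β)) has a unique maximizer on [P_min, P_max]: there exists exactly one P* ∈ [P_min, P_max] such that U(P) ≤ U(P*) for all P ∈ [P_min, P_max]. (Uniqueness of each player's best response at fixed data rate.) -/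
open Real

lemma exp_concave_aux (A β Pmin Pmax : ℝ) (hA : A < 0) (hβ : β < 0) (hPmin : 0 < Pmin)
    (hhigh : (1 - β) / β ≤ A * Pmin ^ β) :
    ConcaveOn ℝ (Set.Icc Pmin Pmax) (fun P : ℝ => Real.exp (A * P ^ β)) := by
  have hd1 : ∀ x : ℝ, 0 < x → HasDerivAt (fun P : ℝ => Real.exp (A * P ^ β))
      (Real.exp (A * x ^ β) * (A * (β * x ^ (β - 1)))) x := by
    intro x hx
    exact ((Real.hasDerivAt_rpow_const (Or.inl hx.ne')).const_mul A).exp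
  have hd2 : ∀ x : ℝ, 0 < x → HasDerivAt
      (fun x : ℝ => Real.exp (A * x ^ β) * (A * (β * x ^ (β - 1))))
      (Real.exp (A * x ^ β) * (A * (β * x ^ (β - 1))) * (A * (β * x ^ (β - 1))) +
        Real.exp (A * x ^ β) * (A * (β * ((β - 1) * x ^ (β - 1 - 1))))) x := by
    intro x hx
    exact (hd1 x hx).mul
      (((Real.hasDerivAt_rpow_const (Or.inl hx.ne')).const_mul β).const_mul A)
  refine concaveOn_of_hasDerivWithinAt2_nonpos (convex_Icc _ _)
    (fun x hx => (hd1 x (hPmin.trans_le hx.1)).continuousAt.continuousWithinAt)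
    (fun x hx => (hd1 x ?_).hasDerivWithinAt) (fun x hx => (hd2 x ?_).hasDerivWithinAt) ?_
  · rw [interior_Icc] at hx
    exact hPmin.trans hx.1
  · rw [interior_Icc] at hx
    exact hPmin.trans hx.1
  · intro x hx
    rw [interior_Icc] at hx
    have hx0 : 0 < x := hPmin.trans hx.1
    have h1 : x ^ β ≤ Pmin ^ β := Real.rpow_le_rpow_of_nonpos hPmin hx.1.le hβ.le
    have h2 : (1 - β) / β ≤ A * x ^ β :=
      hhigh.trans (mul_le_mul_of_nonpos_left h1 hA.le)
    rw [div_le_iff_of_neg hβ] at h2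
    simp only [Real.rpow_sub_one hx0.ne']
    have h3 : 0 < x ^ β := Real.rpow_pos_of_pos hx0 β
    have hE := Real.exp_pos (A * x ^ β)
    generalize x ^ β = y at *
    have h4 : Real.exp (A * y) * (A * (β * (y / x))) * (A * (β * (y / x))) +
        Real.exp (A * y) * (A * (β * ((β - 1) * (y / x / x))))
        = (Real.exp (A * y) * (A * β) * y / x ^ 2) * (A * y * β - (1 - β)) := by
      field_simp
      ring
    rw [h4]
    have := mul_pos_of_neg_of_neg hA hβ
    exact mul_nonpos_of_nonneg_of_nonpos (by positivity) (by linarith)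

lemma strict_aux (c g A β Pmin Pmax : ℝ) (hc : 0 < c) (hg : 1 < g) (hA : A < 0) (hβ : β < 0)
    (hPmin : 0 < Pmin) (hhigh : (1 - β) / β ≤ A * Pmin ^ β) :
    StrictConcaveOn ℝ (Set.Icc Pmin Pmax)
      (fun P : ℝ => -c * P ^ g + Real.log (1 + Real.exp (A * P ^ β))) := by
  have hE := exp_concave_aux A β Pmin Pmax hA hβ hPmin hhigh
  refine ⟨convex_Icc _ _, ?_⟩
  intro x hx y hy hxy a b ha hb hab
  have h1 := (strictConvexOn_rpow hg).2 (hPmin.le.trans hx.1 : (0:ℝ) ≤ x)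
    (hPmin.le.trans hy.1 : (0:ℝ) ≤ y) hxy ha hb hab
  have h2 := hE.2 hx hy ha.le hb.le hab
  have p1 := Real.exp_pos (A * x ^ β)
  have p2 := Real.exp_pos (A * y ^ β)
  have h3 := strictConcaveOn_log_Ioi.concaveOn.2
    (show 1 + Real.exp (A * x ^ β) ∈ Set.Ioi (0:ℝ) from by simp only [Set.mem_Ioi]; positivity)
    (show 1 + Real.exp (A * y ^ β) ∈ Set.Ioi (0:ℝ) from by simp only [Set.mem_Ioi]; positivity)
    ha.le hb.le hab
  simp only [smul_eq_mul] at h1 h2 h3 ⊢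
  have h4 : Real.log (a * (1 + Real.exp (A * x ^ β)) + b * (1 + Real.exp (A * y ^ β))) ≤
      Real.log (1 + Real.exp (A * (a * x + b * y) ^ β)) := by
    apply Real.log_le_log (by positivity)
    linarith
  have h5 := mul_lt_mul_of_pos_left h1 hc
  linarith

/-- Uniqueness of each player's best response at fixed data rate: in the high-PDR regime
the utility `U(P) = -c·P^g + ln(1 + exp(α·(h·P/I)^β))` has exactly one maximizer on
`[P_min, P_max]`. -/
theorem stmt4 (c g α β h I Pmin Pmax : ℝ) (hc : 0 < c) (hg : 1 < g)
    (hα : α < 0) (hβ : β < 0) (hh : 0 < h) (hI : 0 < I)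
    (hPmin : 0 < Pmin) (hle : Pmin ≤ Pmax)
    (hhigh : (1 - β) / β ≤ α * (h * Pmin / I) ^ β) :
    ∃! Pstar : ℝ, Pstar ∈ Set.Icc Pmin Pmax ∧
      ∀ P ∈ Set.Icc Pmin Pmax,
        -c * P ^ g + Real.log (1 + Real.exp (α * (h * P / I) ^ β)) ≤
          -c * Pstar ^ g + Real.log (1 + Real.exp (α * (h * Pstar / I) ^ β)) := by
  have hk : 0 < h / I := by positivity
  have hA : α * (h / I) ^ β < 0 := mul_neg_of_neg_of_pos hα (Real.rpow_pos_of_pos hk β)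
  have key : ∀ P : ℝ, 0 < P → α * (h * P / I) ^ β = α * (h / I) ^ β * P ^ β := by
    intro P hP
    rw [mul_assoc, ← Real.mul_rpow hk.le hP.le, div_mul_eq_mul_div]
  rw [key _ hPmin] at hhigh
  have hS := strict_aux c g _ β Pmin Pmax hc hg hA hβ hPmin hhigh
  have hS' : StrictConcaveOn ℝ (Set.Icc Pmin Pmax)
      (fun P : ℝ => -c * P ^ g + Real.log (1 + Real.exp (α * (h * P / I) ^ β))) := by
    refine hS.congr ?_
    intro P hP
    simp only [key P (hPmin.trans_le hP.1)]
  have hcont : ContinuousOn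
      (fun P : ℝ => -c * P ^ g + Real.log (1 + Real.exp (α * (h * P / I) ^ β)))
      (Set.Icc Pmin Pmax) := by
    intro P hP
    have hP0 : 0 < P := hPmin.trans_le hP.1
    apply ContinuousAt.continuousWithinAt
    have hne : h * P / I ≠ 0 := by positivity
    have hc1 : ContinuousAt (fun P : ℝ => P ^ g) P :=
      Real.continuousAt_rpow_const _ _ (Or.inl hP0.ne')
    have hc2 : ContinuousAt (fun P : ℝ => (h * P / I) ^ β) P :=
      ContinuousAt.rpow_const (by fun_prop) (Or.inl hne)
    exact (hc1.const_mul (-c)).add (ContinuousAt.log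
      (continuousAt_const.add (hc2.const_mul α).rexp) (by positivity))
  obtain ⟨p, hp, hmax⟩ := isCompact_Icc.exists_isMaxOn (Set.nonempty_Icc.2 hle) hcont
  refine ⟨p, ⟨hp, fun P hP => hmax hP⟩, ?_⟩
  rintro q ⟨hq, hqm⟩
  exact hS'.eq_of_isMaxOn (fun P hP => hqm P hP) hmax hq hp
end

section
/- Let γ > 1 be real and let α_x, α_z, α_y, β_x, β_z, β_y be real numbers with α_x < 0, α_y ≤ α_z ≤ α_x, α_x + α_y < 2·α_z, and β_x ≤ β_z ≤ β_y with β_x + β_y ≥ 2·β_z. Then α_x·γ^{β_x} + α_y·γ^{β_y} < 2·α_z·γ^{β_z}. -/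
open Real

/-- Core midpoint inequality behind the Large Midpoint Property: for SINR `γ > 1` and
sigmoid parameters with `α_x < 0`, `α_y ≤ α_z ≤ α_x`, `α_x + α_y < 2α_z`,
`β_x ≤ β_z ≤ β_y` and `β_x + β_y ≥ 2β_z`, one has
`α_x·γ^β_x + α_y·γ^β_y < 2·α_z·γ^β_z`. -/
theorem stmt9 (γ αx αz αy βx βz βy : ℝ) (hγ : 1 < γ)
    (hαx : αx < 0) (hα₁ : αy ≤ αz) (hα₂ : αz ≤ αx) (hαmid : αx + αy < 2 * αz)
    (hβ₁ : βx ≤ βz) (hβ₂ : βz ≤ βy) (hβmid : 2 * βz ≤ βx + βy) :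
    αx * γ ^ βx + αy * γ ^ βy < 2 * (αz * γ ^ βz) := by
  have h0 : 0 < γ := by linarith
  have hp : 0 < γ ^ βx := Real.rpow_pos_of_pos h0 _
  have hq : 0 < γ ^ βz := Real.rpow_pos_of_pos h0 _
  have hr : 0 < γ ^ βy := Real.rpow_pos_of_pos h0 _
  have hpr : γ ^ βx ≤ γ ^ βy :=
    Real.rpow_le_rpow_of_exponent_le hγ.le (by linarith)
  have hm : γ ^ βz * γ ^ βz ≤ γ ^ βx * γ ^ βy := by
    rw [← Real.rpow_add h0, ← Real.rpow_add h0]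
    exact Real.rpow_le_rpow_of_exponent_le hγ.le (by linarith)
  generalize γ ^ βx = p at *
  generalize γ ^ βz = q at *
  generalize γ ^ βy = r at *
  have hs : 2 * q ≤ p + r := by
    by_contra! hc
    nlinarith [sq_nonneg (p - r), mul_pos (sub_pos.2 hc) (add_pos (add_pos hp hr) hq)]
  have h1 : 0 ≤ (αx - αy) * (r - p) := mul_nonneg (by linarith) (by linarith)
  have h2 : 0 ≤ (-(αx + αy)) * (p + r - 2 * q) := mul_nonneg (by linarith) (by linarith)
  have h3 : 0 < (2 * αz - (αx + αy)) * q := mul_pos (by linarith) hq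
  nlinarith
end

section
/- Let γ > 1 and let α_x, α_z, α_y, β_x, β_z, β_y be reals with α_x < 0, α_y ≤ α_z ≤ α_x, α_x + α_y < 2·α_z, β_x ≤ β_z ≤ β_y and β_x + β_y ≥ 2·β_z. Let q ≥ 0, let 0 < R_x < R_y with R_z = (R_x + R_y)/2, and let C ∈ ℝ. Then 2·(C − q/R_z + α_z·γ^{β_z}/2) > (C − q/R_x + α_x·γ^{β_x}/2) + (C − q/R_y + α_y·γ^{β_y}/2). That is, the per-player term of the potential function F(P, R) = −c·P^g − q/R + α(R)·γ^{β(R)}/2 satisfies the strict large-midpoint inequality in the rate variable at fixed power (C = −c·P^g). -/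
open Real

/-- The per-player term of the Link Adaptation potential function,
`F(P, R) = -c·P^g - q/R + α(R)·γ^{β(R)}/2`, satisfies the strict large-midpoint
inequality in the rate variable at fixed power (here `C = -c·P^g`). -/
theorem stmt10 (γ αx αz αy βx βz βy : ℝ) (hγ : 1 < γ)
    (hαx : αx < 0) (hα₁ : αy ≤ αz) (hα₂ : αz ≤ αx) (hαmid : αx + αy < 2 * αz)
    (hβ₁ : βx ≤ βz) (hβ₂ : βz ≤ βy) (hβmid : 2 * βz ≤ βx + βy)
    (q : ℝ) (hq : 0 ≤ q) (Rx Ry Rz : ℝ) (hRx : 0 < Rx) (hRxy : Rx < Ry)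
    (hRz : Rz = (Rx + Ry) / 2) (C : ℝ) :
    (C - q / Rx + αx * γ ^ βx / 2) + (C - q / Ry + αy * γ ^ βy / 2) <
      2 * (C - q / Rz + αz * γ ^ βz / 2) := by
  have hγ0 : 0 < γ := by linarith
  have hX : 0 < γ ^ βx := Real.rpow_pos_of_pos hγ0 _
  have hY : 0 < γ ^ βy := Real.rpow_pos_of_pos hγ0 _
  have hZ : 0 < γ ^ βz := Real.rpow_pos_of_pos hγ0 _
  have hZY : γ ^ βz ≤ γ ^ βy := Real.rpow_le_rpow_of_exponent_le hγ.le hβ₂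
  have hprod : γ ^ βz * γ ^ βz ≤ γ ^ βx * γ ^ βy := by
    rw [← Real.rpow_add hγ0, ← Real.rpow_add hγ0]
    exact Real.rpow_le_rpow_of_exponent_le hγ.le (by linarith)
  generalize γ ^ βx = X at *
  generalize γ ^ βy = Y at *
  generalize γ ^ βz = Z at *
  have hsum : 2 * Z ≤ X + Y := by
    refine (sq_le_sq₀ (by positivity) (by positivity)).mp ?_
    nlinarith [sq_nonneg (X - Y)]
  have h1 : 0 < (2 * αz - αx - αy) * Y := mul_pos (by linarith) hY
  have h2 : 0 ≤ (-αx) * (X + Y - 2 * Z) := mul_nonneg (by linarith) (by linarith)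
  have h3 : 0 ≤ (αx - αz) * (Y - Z) := mul_nonneg (by linarith) (by linarith)
  have hRy : 0 < Ry := by linarith
  have hR : 0 ≤ q / Rx + q / Ry - 2 * (q / Rz) := by
    have : q / Rx + q / Ry - 2 * (q / Rz) = q * (Rx - Ry) ^ 2 / (Rx * Ry * (Rx + Ry)) := by
      subst hRz
      have : Rx + Ry ≠ 0 := by positivity
      field_simp
      ring
    rw [this]
    positivity
  linarith
end

section
/- Let a ≤ b be integers and let f : ℤ → ℝ satisfy the Large Midpoint Property on [a, b]: for every integer z with a ≤ z and z + 2 ≤ b, if f(z) ≠ f(z+2) then f(z+1) > min(f(z), f(z+2)), and if f(z) = f(z+2) then f(z+1) ≥ f(z). Suppose x ∈ [a, b] is a local maximizer: f(x−1) ≤ f(x) whenever a ≤ x−1, and f(x+1) ≤ f(x) whenever x+1 ≤ b. Then x is a global maximizer: f(y) ≤ f(x) for every integer y ∈ [a, b]. -/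
/-- For a function on an integer interval satisfying the Large Midpoint Property,
a local maximizer is a global maximizer. -/
theorem stmt11 (a b : ℤ) (hab : a ≤ b) (f : ℤ → ℝ)
    (hLMP : ∀ z : ℤ, a ≤ z → z + 2 ≤ b →
      (f z ≠ f (z + 2) → min (f z) (f (z + 2)) < f (z + 1)) ∧
      (f z = f (z + 2) → f z ≤ f (z + 1)))
    (x : ℤ) (hxa : a ≤ x) (hxb : x ≤ b)
    (hloc₁ : a ≤ x - 1 → f (x - 1) ≤ f x)
    (hloc₂ : x + 1 ≤ b → f (x + 1) ≤ f x) :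
    ∀ y : ℤ, a ≤ y → y ≤ b → f y ≤ f x := by
  have up : ∀ n : ℕ, x + n + 1 ≤ b → f (x + n + 1) ≤ f (x + n) ∧ f (x + n + 1) ≤ f x := by
    intro n
    induction n with
    | zero => intro h; simp at h ⊢; exact hloc₂ h
    | succ k ih =>
      intro h
      push_cast at h ⊢
      obtain ⟨h1, h2⟩ := ih (by omega)
      obtain ⟨p, q⟩ := hLMP (x + k) (by omega) (by omega)
      rw [show x + (k : ℤ) + 2 = x + (k + 1) + 1 by ring] at p q
      rw [show x + (k : ℤ) + 1 = x + (k + 1) by ring] at p q h1 h2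
      have : f (x + (k + 1) + 1) ≤ f (x + (k + 1)) := by
        by_cases e : f (x + k) = f (x + (k + 1) + 1)
        · have := q e
          linarith
        · rcases min_lt_iff.1 (p e) with h | h <;> linarith
      exact ⟨this, this.trans h2⟩
  have down : ∀ n : ℕ, a ≤ x - n - 1 → f (x - n - 1) ≤ f (x - n) ∧ f (x - n - 1) ≤ f x := by
    intro n
    induction n with
    | zero => intro h; simp at h ⊢; exact hloc₁ (by omega)
    | succ k ih =>
      intro h
      push_cast at h ⊢
      obtain ⟨h1, h2⟩ := ih (by omega)
      obtain ⟨p, q⟩ := hLMP (x - (k + 1) - 1) (by omega) (by omega)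
      rw [show x - ((k : ℤ) + 1) - 1 + 2 = x - k by ring] at p q
      rw [show x - ((k : ℤ) + 1) - 1 + 1 = x - (k + 1) by ring] at p q
      rw [show x - (k : ℤ) - 1 = x - (k + 1) by ring] at h1 h2
      have : f (x - (k + 1) - 1) ≤ f (x - (k + 1)) := by
        by_cases e : f (x - (k + 1) - 1) = f (x - k)
        · exact q e
        · rcases min_lt_iff.1 (p e) with h | h <;> linarith
      exact ⟨this, this.trans h2⟩
  intro y hya hyb
  rcases lt_trichotomy y x with h | h | h
  · have := (down (x - y - 1).toNat (by omega)).2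
    rwa [show x - ((x - y - 1).toNat : ℤ) - 1 = y by omega] at this
  · rw [h]
  · have := (up (y - x - 1).toNat (by omega)).2
    rwa [show x + ((y - x - 1).toNat : ℤ) + 1 = y by omega] at this
end

section
/- Let p ∈ (0, 1), 0 < T_slot ≤ T_s, T_payload > 0, m ∈ ℕ, and let d ≥ 0 satisfy d·(1−p)·T_payload < p^{m+1}·T_slot; let l, e₀, f₀ be arbitrary reals. Then the Adaptive Backoff utility V(w) = d·(1−p)·T_payload/(T_slot·(p·w + 1) + T_s − T_slot) − l·(e₀·w + f₀) − p^{m+1}/(p·w + 1) is strictly concave on [0, ∞). -/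
theorem div_add_div_same_aux (a b x y : ℝ) (hx : x ≠ 0) (hy : y ≠ 0) :
    a * (1 / x) + b * (1 / y) = (a * y + b * x) / (x * y) := by
  field_simp

theorem gap_id (a b x y : ℝ) (ha : 0 < a) (hb : 0 < b) (hab : a + b = 1) (hx : 0 < x) (hy : 0 < y) :
    a * (1 / x) + b * (1 / y) - 1 / (a * x + b * y)
      = a * b * (x - y) ^ 2 / (x * y * (a * x + b * y)) := by
  have h : 0 < a * x + b * y := by positivity
  obtain rfl : b = 1 - a := by linarith
  have h' := h.ne'
  rw [div_add_div_same_aux a (1 - a) x y hx.ne' hy.ne', div_sub_div _ _ (by positivity) h',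
    div_eq_div_iff (by positivity) (by positivity)]
  ring

/-- The Adaptive Backoff utility
`V(w) = d·(1-p)·T_payload/(T_slot·(p·w+1) + T_s - T_slot) - l·(e₀·w + f₀) - p^(m+1)/(p·w+1)`
is strictly concave on `[0, ∞)` whenever `d·(1-p)·T_payload < p^(m+1)·T_slot`. -/
theorem stmt13 (p Tslot Ts Tpayload : ℝ) (hp : p ∈ Set.Ioo (0 : ℝ) 1)
    (hTslot : 0 < Tslot) (hTs : Tslot ≤ Ts) (hTp : 0 < Tpayload)
    (m : ℕ) (d : ℝ) (hd : 0 ≤ d)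
    (hsmall : d * (1 - p) * Tpayload < p ^ (m + 1) * Tslot) (l e₀ f₀ : ℝ) :
    StrictConcaveOn ℝ (Set.Ici (0 : ℝ))
      (fun w : ℝ => d * (1 - p) * Tpayload / (Tslot * (p * w + 1) + Ts - Tslot)
        - l * (e₀ * w + f₀) - p ^ (m + 1) / (p * w + 1)) := by
  obtain ⟨hp0, hp1⟩ := hp
  obtain ⟨C, hC⟩ : ∃ C, C = p ^ (m + 1) := ⟨_, rfl⟩
  obtain ⟨A, hA⟩ : ∃ A, A = d * (1 - p) * Tpayload := ⟨_, rfl⟩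
  have hA0 : 0 ≤ A := by
    rw [hA]; exact mul_nonneg (mul_nonneg hd (by linarith)) hTp.le
  rw [← hC, ← hA] at hsmall
  rw [← hC, ← hA]
  obtain ⟨c, hc⟩ : ∃ c, c = (Ts - Tslot) / Tslot := ⟨_, rfl⟩
  obtain ⟨K, hK⟩ : ∃ K, K = A / Tslot := ⟨_, rfl⟩
  have hc0 : 0 ≤ c := by rw [hc]; exact div_nonneg (by linarith) hTslot.le
  have hK0 : 0 ≤ K := by rw [hK]; positivity
  have hKC : K < C := by rw [hK, div_lt_iff₀ hTslot]; exact hsmall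
  have key : ∀ w : ℝ, A / (Tslot * (p * w + 1) + Ts - Tslot) = K * (1 / (p * w + 1 + c)) := by
    intro w
    have e : Tslot * (p * w + 1) + Ts - Tslot = Tslot * (p * w + 1 + c) := by
      rw [hc]; field_simp; ring
    rw [e, hK, div_mul_div_comm, mul_one]
  refine ⟨convex_Ici 0, ?_⟩
  intro x hx y hy hxy a b ha hb hab
  have hx : 0 ≤ x := hx
  have hy : 0 ≤ y := hy
  simp only [smul_eq_mul, key]
  obtain ⟨u, hu⟩ : ∃ u, u = p * x + 1 := ⟨_, rfl⟩
  obtain ⟨v, hv⟩ : ∃ v, v = p * y + 1 := ⟨_, rfl⟩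
  have hu0 : 0 < u := by rw [hu]; positivity
  have hv0 : 0 < v := by rw [hv]; positivity
  have huv : u - v ≠ 0 := by
    have : u - v = p * (x - y) := by rw [hu, hv]; ring
    rw [this]; exact mul_ne_zero hp0.ne' (sub_ne_zero.2 hxy)
  have e1 : p * (a * x + b * y) + 1 = a * u + b * v := by
    rw [hu, hv]; linear_combination -hab
  have e2 : a * u + b * v + c = a * (u + c) + b * (v + c) := by linear_combination -c * hab
  rw [e1, ← hu, ← hv, e2]
  have g1 := gap_id a b u v ha hb hab hu0 hv0
  have g2 := gap_id a b (u + c) (v + c) ha hb hab (by positivity) (by positivity)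
  have hsq : 0 < (u - v) ^ 2 := by positivity
  have hpos : 0 < a * b * (u - v) ^ 2 / (u * v * (a * u + b * v)) := by positivity
  have hle : a * b * (u + c - (v + c)) ^ 2 / ((u + c) * (v + c) * (a * (u + c) + b * (v + c)))
      ≤ a * b * (u - v) ^ 2 / (u * v * (a * u + b * v)) := by
    rw [add_sub_add_right_eq_sub]
    gcongr <;> linarith
  rw [← g1] at hpos
  rw [← g1, ← g2] at hle
  have h1 := mul_le_mul_of_nonneg_left hle hK0
  have h2 := mul_lt_mul_of_pos_right hKC hpos
  rw [div_eq_mul_one_div C u, div_eq_mul_one_div C v, div_eq_mul_one_div C (a * u + b * v)]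
  have h3 : a * (l * f₀) + b * (l * f₀) = l * f₀ := by linear_combination (l * f₀) * hab
  generalize 1 / (a * u + b * v) = q1 at *
  generalize 1 / (a * (u + c) + b * (v + c)) = q2 at *
  linarith [h1, h2, h3]
end

section
/- Let p ∈ (0, 1), 0 < T_slot ≤ T_s, T_payload > 0, m ∈ ℕ, d ≥ 0 with d·(1−p)·T_payload < p^{m+1}·T_slot, and l, e₀, f₀ ∈ ℝ. Then for any 0 ≤ a ≤ b, the Adaptive Backoff utility V(w) = d·(1−p)·T_payload/(T_slot·(p·w + 1) + T_s − T_slot) − l·(e₀·w + f₀) − p^{m+1}/(p·w + 1) has a unique maximizer on [a, b]: there exists exactly one w* ∈ [a, b] with V(w) ≤ V(w*) for all w ∈ [a, b]. (Existence and uniqueness of the Nash equilibrium contention window in each stage of the Adaptive Backoff Game.) -/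
theorem gap_aux (x y : ℝ) (hx : 0 < x) (hy : 0 < y) :
    1 / x + 1 / y - 2 * (1 / ((x + y) / 2)) = (x - y) ^ 2 / (x * y * (x + y)) := by
  have : x + y ≠ 0 := by positivity
  field_simp
  ring

theorem gap_lt (A C T s x y : ℝ) (hA : 0 ≤ A) (hT : 0 < T) (hs : 0 ≤ s) (hAC : A < C * T)
    (hx : 0 < x) (hy : 0 < y) (hxy : x ≠ y) :
    A * (1 / (T * x + s) + 1 / (T * y + s) - 2 * (1 / (((T * x + s) + (T * y + s)) / 2))) <
      C * (1 / x + 1 / y - 2 * (1 / ((x + y) / 2))) := by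
  rw [gap_aux _ _ (by positivity) (by positivity), gap_aux _ _ hx hy]
  have hne : x - y ≠ 0 := sub_ne_zero.mpr hxy
  have h1 : ((T * x + s) - (T * y + s)) ^ 2 /
      ((T * x + s) * (T * y + s) * ((T * x + s) + (T * y + s))) ≤
      ((T * x + s) - (T * y + s)) ^ 2 / ((T * x) * (T * y) * (T * x + T * y)) := by
    gcongr <;> linarith
  have h2 : ((T * x + s) - (T * y + s)) ^ 2 / ((T * x) * (T * y) * (T * x + T * y)) =
      ((x - y) ^ 2 / (x * y * (x + y))) / T := by
    have : x + y ≠ 0 := by positivity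
    have e : T * x + T * y = T * (x + y) := by ring
    rw [e]
    field_simp
    ring
  rw [h2] at h1
  have hq : 0 < (x - y) ^ 2 / (x * y * (x + y)) := by positivity
  generalize (x - y) ^ 2 / (x * y * (x + y)) = q at *
  calc _ ≤ A * (q / T) := mul_le_mul_of_nonneg_left h1 hA
    _ < (C * T) * (q / T) := mul_lt_mul_of_pos_right hAC (by positivity)
    _ = C * q := by field_simp

/-- Existence and uniqueness of the Nash-equilibrium contention window in each stage of
the Adaptive Backoff Game: the utility `V` has exactly one maximizer on any window
interval `[a, b] ⊆ [0, ∞)`. -/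
theorem stmt14 (p Tslot Ts Tpayload : ℝ) (hp : p ∈ Set.Ioo (0 : ℝ) 1)
    (hTslot : 0 < Tslot) (hTs : Tslot ≤ Ts) (hTp : 0 < Tpayload)
    (m : ℕ) (d : ℝ) (hd : 0 ≤ d)
    (hsmall : d * (1 - p) * Tpayload < p ^ (m + 1) * Tslot) (l e₀ f₀ : ℝ)
    (a b : ℝ) (ha : 0 ≤ a) (hab : a ≤ b) :
    ∃! wstar : ℝ, wstar ∈ Set.Icc a b ∧
      ∀ w ∈ Set.Icc a b,
        d * (1 - p) * Tpayload / (Tslot * (p * w + 1) + Ts - Tslot)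
            - l * (e₀ * w + f₀) - p ^ (m + 1) / (p * w + 1) ≤
          d * (1 - p) * Tpayload / (Tslot * (p * wstar + 1) + Ts - Tslot)
            - l * (e₀ * wstar + f₀) - p ^ (m + 1) / (p * wstar + 1) := by
  obtain ⟨hp0, hp1⟩ := hp
  have hA : 0 ≤ d * (1 - p) * Tpayload :=
    mul_nonneg (mul_nonneg hd (by linarith)) hTp.le
  have hpos : ∀ w ∈ Set.Icc a b, 0 < p * w + 1 := by
    intro w hw
    have := mul_nonneg hp0.le (ha.trans hw.1)
    linarith
  have hpos2 : ∀ w ∈ Set.Icc a b, 0 < Tslot * (p * w + 1) + Ts - Tslot := by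
    intro w hw
    have := mul_pos hTslot (hpos w hw)
    linarith
  have hc : ContinuousOn (fun w : ℝ => d * (1 - p) * Tpayload / (Tslot * (p * w + 1) + Ts - Tslot)
            - l * (e₀ * w + f₀) - p ^ (m + 1) / (p * w + 1)) (Set.Icc a b) := by
    refine ContinuousOn.sub (ContinuousOn.sub (ContinuousOn.div (by fun_prop) (by fun_prop)
      fun w hw => (hpos2 w hw).ne') (by fun_prop))
      (ContinuousOn.div (by fun_prop) (by fun_prop) fun w hw => (hpos w hw).ne')
  obtain ⟨w, hw, hmax⟩ := isCompact_Icc.exists_isMaxOn (Set.nonempty_Icc.mpr hab) hc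
  refine ⟨w, ⟨hw, fun v hv => hmax hv⟩, ?_⟩
  rintro v ⟨hv, hvmax⟩
  by_contra hne
  have hz : (v + w) / 2 ∈ Set.Icc a b :=
    ⟨by linarith [hv.1, hw.1], by linarith [hv.2, hw.2]⟩
  have k1 := hvmax _ hz
  have k2 := isMaxOn_iff.mp hmax _ hz
  have g := gap_lt (d * (1 - p) * Tpayload) (p ^ (m + 1)) Tslot (Ts - Tslot) (p * v + 1) (p * w + 1)
    hA hTslot (by linarith) hsmall (hpos v hv) (hpos w hw)
    (fun h => hne (mul_left_cancel₀ hp0.ne' (by linarith)))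
  have e1 : ((p * v + 1) + (p * w + 1)) / 2 = p * ((v + w) / 2) + 1 := by ring
  have e2 : ((Tslot * (p * v + 1) + (Ts - Tslot)) + (Tslot * (p * w + 1) + (Ts - Tslot))) / 2
      = Tslot * (p * ((v + w) / 2) + 1) + Ts - Tslot := by ring
  rw [e1, e2, ← add_sub_assoc, ← add_sub_assoc] at g
  simp only [div_eq_mul_one_div (d * (1 - p) * Tpayload), div_eq_mul_one_div (p ^ (m + 1))] at k1 k2
  generalize 1 / (Tslot * (p * v + 1) + Ts - Tslot) = u1 at *
  generalize 1 / (Tslot * (p * w + 1) + Ts - Tslot) = u2 at *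
  generalize 1 / (Tslot * (p * ((v + w) / 2) + 1) + Ts - Tslot) = u3 at *
  generalize 1 / (p * v + 1) = u4 at *
  generalize 1 / (p * w + 1) = u5 at *
  generalize 1 / (p * ((v + w) / 2) + 1) = u6 at *
  generalize d * (1 - p) * Tpayload = A at *
  generalize p ^ (m + 1) = C at *
  linarith
end
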